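/- Let f be a strictly convex standard self-concordant function on ℝⁿ, x a point with Newton decrement λ(x) < 1, and let σ_1 ≥ … ≥ σ_n > 0 be the eigenvalues of ∇²f(x). Let Q be the truncated approximation of ∇²f(x) with parameter N, d̂ := −Q⁻¹ ∇f(x), and x⁺ := x + d̂ (unit step). Then λ(x⁺) ≤ [(1 − σ_n/σ_{N+1}) + λ(x)] / (1 − λ(x))² · λ(x). -/

import Mathlib

open Matrix

/-!
A cubic form on a Euclidean plane is a trigonometric polynomial on the unit circle, and a
three-point quadrature rule shows that its mixed coefficients are bounded by its maximum. Hence the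
bound on third derivatives along lines polarizes to `|D³f(x)[u, v, v]| ≤ 2 ‖u‖_x ‖v‖_x²` in the
local norm `‖v‖_x = √(vᵀ ∇²f(x) v)`. Integrated along the segment from `x` to `x + d` with
`r = ‖d‖_x < 1`, it gives `(1 - r) ‖v‖_x ≤ ‖v‖_{x + d}` and, by comparison with
`s ↦ 1 / (1 - s r)`, the bound `r² / (1 - r)` for the dual norm of the first-order Taylor remainder
of the gradient.

The Newton decrement is the dual local norm of the gradient `g`. If `c Q ≤ ∇²f(x) ≤ Q` in the
Loewner order, the step `d = -Q⁻¹ g` satisfies `‖d‖_x ≤ λ`, and the residual `g + ∇²f(x) d` of the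
Newton equation has dual norm at most `(1 - c) λ`, because
`0 ≤ ∇²f(x)⁻¹ - Q⁻¹ ≤ (1 - c) ∇²f(x)⁻¹`.
The truncation at `N` satisfies these inequalities with `c = σ_n / σ_{N+1}`.
-/

section Trilinear

/-- A binary cubic form, as a trigonometric polynomial on the unit circle. -/
noncomputable def circleCubic (a b c d θ : ℝ) : ℝ :=
  a * Real.cos θ ^ 3 + 3 * b * Real.cos θ ^ 2 * Real.sin θ
    + 3 * c * Real.cos θ * Real.sin θ ^ 2 + d * Real.sin θ ^ 3

/-- The weight `((1 + 2 cos 2θ) / 3) ^ 2`, the square of a normalized Dirichlet kernel, of the node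
`θ` in a three-point quadrature rule for binary cubic forms. -/
noncomputable def cubicWeight (θ : ℝ) : ℝ := ((4 * Real.cos θ ^ 2 - 1) / 3) ^ 2

lemma cos_two_pi_div_three : Real.cos (2 * Real.pi / 3) = -1 / 2 := by
  rw [show 2 * Real.pi / 3 = Real.pi - Real.pi / 3 by ring, Real.cos_pi_sub, Real.cos_pi_div_three]
  norm_num

lemma sin_two_pi_div_three : Real.sin (2 * Real.pi / 3) = √3 / 2 := by
  rw [show 2 * Real.pi / 3 = Real.pi - Real.pi / 3 by ring, Real.sin_pi_sub, Real.sin_pi_div_three]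

lemma cubicWeight_nonneg (θ : ℝ) : 0 ≤ cubicWeight θ := sq_nonneg _

lemma sum_cubicWeight_nodes (θ : ℝ) :
    cubicWeight θ + cubicWeight (θ + 2 * Real.pi / 3) + cubicWeight (θ - 2 * Real.pi / 3) = 1 := by
  have hs : √(3 : ℝ) ^ 2 = 3 := Real.sq_sqrt (by norm_num)
  have hcs := Real.cos_sq_add_sin_sq θ
  simp only [cubicWeight, Real.cos_add, Real.cos_sub, cos_two_pi_div_three, sin_two_pi_div_three]
  set C := Real.cos θ
  set S := Real.sin θ
  set k := √(3 : ℝ)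
  have hk4 : k ^ 4 = 9 := by linear_combination (k ^ 2 + 3) * hs
  have hS2 : S ^ 2 = 1 - C ^ 2 := by linear_combination hcs
  have hS4 : S ^ 4 = (1 - C ^ 2) ^ 2 := by rw [← hS2]; ring
  ring_nf
  simp only [hs, hk4, hS2, hS4]
  ring

/-- The nodes and weights come from matching the frequencies `exp (i φ)` and `exp (3 i φ)`, the only
ones that a cubic form has on the circle. -/
lemma circleCubic_quadrature (a b c d θ : ℝ) :
    Real.cos (3 * θ) * a + Real.sin (3 * θ) * b =
      cubicWeight θ * circleCubic a b c d θ
        + cubicWeight (θ + 2 * Real.pi / 3) * circleCubic a b c d (θ + 2 * Real.pi / 3)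
        + cubicWeight (θ - 2 * Real.pi / 3) * circleCubic a b c d (θ - 2 * Real.pi / 3) := by
  have hs : √(3 : ℝ) ^ 2 = 3 := Real.sq_sqrt (by norm_num)
  have hcs := Real.cos_sq_add_sin_sq θ
  simp only [cubicWeight, circleCubic, Real.cos_add, Real.cos_sub, Real.sin_add, Real.sin_sub,
    cos_two_pi_div_three, sin_two_pi_div_three, Real.cos_three_mul, Real.sin_three_mul]
  set C := Real.cos θ
  set S := Real.sin θ
  set k := √(3 : ℝ)
  have hk4 : k ^ 4 = 9 := by linear_combination (k ^ 2 + 3) * hs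
  have hk6 : k ^ 6 = 27 := by linear_combination (k ^ 4 + 3 * k ^ 2 + 9) * hs
  ring_nf
  simp only [hs, hk4, hk6]
  have hS2 : S ^ 2 = 1 - C ^ 2 := by linear_combination hcs
  have hS3 : S ^ 3 = (1 - C ^ 2) * S := by rw [← hS2]; ring
  have hS4 : S ^ 4 = (1 - C ^ 2) ^ 2 := by rw [← hS2]; ring
  have hS5 : S ^ 5 = (1 - C ^ 2) ^ 2 * S := by rw [← hS2]; ring
  have hS6 : S ^ 6 = (1 - C ^ 2) ^ 3 := by rw [← hS2]; ring
  have hS7 : S ^ 7 = (1 - C ^ 2) ^ 3 * S := by rw [← hS2]; ring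
  simp only [hS2, hS3, hS4, hS5, hS6, hS7]
  ring

lemma exists_cos_sin_three_mul {α β : ℝ} (h : α ^ 2 + β ^ 2 = 1) :
    ∃ θ : ℝ, Real.cos (3 * θ) = α ∧ Real.sin (3 * θ) = β := by
  have hnorm : ‖(⟨α, β⟩ : ℂ)‖ = 1 := by simp [Complex.norm_eq_sqrt_sq_add_sq, h]
  have hne : (⟨α, β⟩ : ℂ) ≠ 0 := norm_ne_zero_iff.mp (by simp [hnorm])
  refine ⟨Complex.arg ⟨α, β⟩ / 3, ?_, ?_⟩ <;> rw [mul_div_cancel₀ _ (by norm_num)]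
  · rw [Complex.cos_arg hne, hnorm, div_one]
  · rw [Complex.sin_arg, hnorm, div_one]

lemma abs_mul_add_mul_le_of_abs_circleCubic_le {a b c d M : ℝ}
    (h : ∀ θ, |circleCubic a b c d θ| ≤ M) {α β : ℝ} (hαβ : α ^ 2 + β ^ 2 = 1) :
    |α * a + β * b| ≤ M := by
  obtain ⟨θ, rfl, rfl⟩ := exists_cos_sin_three_mul hαβ
  have hnode : ∀ φ, |cubicWeight φ * circleCubic a b c d φ| ≤ cubicWeight φ * M := fun φ => by
    rw [abs_mul, abs_of_nonneg (cubicWeight_nonneg φ)]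
    exact mul_le_mul_of_nonneg_left (h φ) (cubicWeight_nonneg φ)
  rw [circleCubic_quadrature a b c d θ, ← one_mul M, ← sum_cubicWeight_nodes θ, add_mul, add_mul]
  exact (abs_add_three _ _ _).trans (add_le_add_three (hnode _) (hnode _) (hnode _))

variable {E : Type*} [NormedAddCommGroup E] [NormedSpace ℝ E]

lemma exists_orthogonal_decomposition_of_unit {B : E →L[ℝ] E →L[ℝ] ℝ}
    (hB : ∀ u v, B u v = B v u) (hBpos : ∀ u, u ≠ 0 → 0 < B u u) {u v : E} (hu : B u u = 1)
    (hv : B v v = 1) :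
    ∃ (α β : ℝ) (e : E), α ^ 2 + β ^ 2 = 1 ∧ u = α • v + β • e ∧ B e v = 0 ∧ B e e ≤ 1 := by
  set p := u - B u v • v with hp
  have hpp : B p p = 1 - B u v ^ 2 := by simp [hp, hu, hv, hB v u]; ring
  have hpv : B p v = 0 := by simp [hp, hv]
  rcases eq_or_ne p 0 with hp0 | hp0
  · refine ⟨B u v, 0, 0, ?_, ?_, by simp, by simp⟩
    · rw [hp0, map_zero] at hpp
      linear_combination hpp
    · rw [smul_zero, add_zero]
      exact sub_eq_zero.mp hp0
  · have hβ : √(B p p) ≠ 0 := (Real.sqrt_pos.mpr (hBpos p hp0)).ne'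
    have hβ2 : √(B p p) ^ 2 = B p p := Real.sq_sqrt (hBpos p hp0).le
    refine ⟨B u v, √(B p p), (√(B p p))⁻¹ • p, ?_, ?_, by simp [hpv], le_of_eq ?_⟩
    · rw [hβ2, hpp]; ring
    · rw [smul_inv_smul₀ hβ, hp]; abel
    · simp only [map_smul, _root_.smul_apply, smul_eq_mul]
      rw [← mul_assoc, ← sq, inv_pow, hβ2, inv_mul_cancel₀ (hBpos p hp0).ne']

variable {T : E →L[ℝ] E →L[ℝ] E →L[ℝ] ℝ}
  (hT₁₂ : ∀ u v w, T u v w = T v u w) (hT₂₃ : ∀ u v w, T u v w = T u w v)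
include hT₁₂ hT₂₃

lemma trilinear_cos_smul_add_sin_smul (v e : E) (θ : ℝ) :
    T (Real.cos θ • v + Real.sin θ • e) (Real.cos θ • v + Real.sin θ • e)
      (Real.cos θ • v + Real.sin θ • e) =
      circleCubic (T v v v) (T e v v) (T v e e) (T e e e) θ := by
  have hvve : T v v e = T e v v := by rw [hT₂₃, hT₁₂]
  have heev : T e e v = T v e e := by rw [hT₂₃, hT₁₂]
  simp only [map_add, map_smul, _root_.add_apply, _root_.smul_apply, smul_eq_mul, hT₁₂ v e v,
    hT₁₂ e v e, hvve, heev, circleCubic]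
  ring

variable {B : E →L[ℝ] E →L[ℝ] ℝ} (hB : ∀ u v, B u v = B v u) (hBpos : ∀ u, u ≠ 0 → 0 < B u u)
include hB hBpos

lemma abs_trilinear_le_of_unit {M : ℝ} (hTM : ∀ w, B w w ≤ 1 → |T w w w| ≤ M) {u v : E}
    (hu : B u u = 1) (hv : B v v = 1) : |T u v v| ≤ M := by
  obtain ⟨α, β, e, hαβ, rfl, hev, hee⟩ := exists_orthogonal_decomposition_of_unit hB hBpos hu hv
  have hcircle : ∀ θ, |circleCubic (T v v v) (T e v v) (T v e e) (T e e e) θ| ≤ M := fun θ => by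
    rw [← trilinear_cos_smul_add_sin_smul hT₁₂ hT₂₃]
    apply hTM
    simp only [map_add, map_smul, _root_.add_apply, _root_.smul_apply, smul_eq_mul, hv, hev,
      hB v e]
    nlinarith [Real.cos_sq_add_sin_sq θ, sq_nonneg (Real.sin θ)]
  simpa using abs_mul_add_mul_le_of_abs_circleCubic_le hcircle hαβ

lemma abs_trilinear_le {M : ℝ} (hTM : ∀ w, |T w w w| ≤ M * √(B w w) ^ 3) (u v : E) :
    |T u v v| ≤ M * √(B u u) * √(B v v) ^ 2 := by
  rcases eq_or_ne u 0 with rfl | hu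
  · simp
  rcases eq_or_ne v 0 with rfl | hv
  · simp
  have hnormalize : ∀ w, w ≠ 0 → 0 < √(B w w) ∧ B ((√(B w w))⁻¹ • w) ((√(B w w))⁻¹ • w) = 1 :=
    fun w hw => by
      have hpos := Real.sqrt_pos.mpr (hBpos w hw)
      refine ⟨hpos, ?_⟩
      simp only [map_smul, _root_.smul_apply, smul_eq_mul]
      rw [← mul_assoc, ← sq, inv_pow, Real.sq_sqrt (hBpos w hw).le,
        inv_mul_cancel₀ (hBpos w hw).ne']
  obtain ⟨hp, hup⟩ := hnormalize u hu
  obtain ⟨hq, hvq⟩ := hnormalize v hv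
  set p := √(B u u)
  set q := √(B v v)
  have hM : 0 ≤ M := by
    have := (abs_nonneg _).trans (hTM (p⁻¹ • u))
    rwa [hup, Real.sqrt_one, one_pow, mul_one] at this
  have hunit : |T (p⁻¹ • u) (q⁻¹ • v) (q⁻¹ • v)| ≤ M :=
    abs_trilinear_le_of_unit hT₁₂ hT₂₃ hB hBpos (fun w hw => (hTM w).trans
      (mul_le_of_le_one_right hM (pow_le_one₀ (Real.sqrt_nonneg _) (Real.sqrt_le_one.mpr hw))))
      hup hvq
  have hscale : T u v v = p * q ^ 2 * T (p⁻¹ • u) (q⁻¹ • v) (q⁻¹ • v) := by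
    simp only [map_smul, _root_.smul_apply, smul_eq_mul]
    field_simp
  have hpq : 0 < p * q ^ 2 := mul_pos hp (pow_pos hq 2)
  calc |T u v v| = p * q ^ 2 * |T (p⁻¹ • u) (q⁻¹ • v) (q⁻¹ • v)| := by
        rw [hscale, abs_mul, abs_of_pos hpq]
    _ ≤ p * q ^ 2 * M := mul_le_mul_of_nonneg_left hunit hpq.le
    _ = M * p * q ^ 2 := by ring

end Trilinear

section Comparison

lemma sub_le_sub_of_hasDerivAt_le {φ φ' ψ ψ' : ℝ → ℝ} {a b : ℝ} (hab : a ≤ b)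
    (hφ : ∀ t ∈ Set.Icc a b, HasDerivAt φ (φ' t) t)
    (hψ : ∀ t ∈ Set.Icc a b, HasDerivAt ψ (ψ' t) t)
    (hle : ∀ t ∈ Set.Icc a b, φ' t ≤ ψ' t) : φ b - φ a ≤ ψ b - ψ a := by
  have hmono : MonotoneOn (ψ - φ) (Set.Icc a b) :=
    monotoneOn_of_hasDerivWithinAt_nonneg (convex_Icc a b)
      (fun t ht => ((hψ t ht).sub (hφ t ht)).continuousAt.continuousWithinAt)
      (fun t ht => ((hψ t (interior_subset ht)).sub (hφ t (interior_subset ht))).hasDerivWithinAt)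
      (fun t ht => sub_nonneg.mpr (hle t (interior_subset ht)))
  have := hmono (Set.left_mem_Icc.mpr hab) (Set.right_mem_Icc.mpr hab) hab
  simp only [Pi.sub_apply] at this
  linarith

lemma taylor_remainder_le_of_hasDerivAt_le {φ φ' φ'' ψ ψ' ψ'' : ℝ → ℝ} {a b : ℝ} (hab : a ≤ b)
    (hφ : ∀ t ∈ Set.Icc a b, HasDerivAt φ (φ' t) t)
    (hφ' : ∀ t ∈ Set.Icc a b, HasDerivAt φ' (φ'' t) t)
    (hψ : ∀ t ∈ Set.Icc a b, HasDerivAt ψ (ψ' t) t)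
    (hψ' : ∀ t ∈ Set.Icc a b, HasDerivAt ψ' (ψ'' t) t)
    (hle : ∀ t ∈ Set.Icc a b, φ'' t ≤ ψ'' t) :
    φ b - φ a - (b - a) * φ' a ≤ ψ b - ψ a - (b - a) * ψ' a := by
  have hderiv : ∀ t ∈ Set.Icc a b, φ' t - φ' a ≤ ψ' t - ψ' a := fun t ht =>
    have hsub : Set.Icc a t ⊆ Set.Icc a b := Set.Icc_subset_Icc_right ht.2
    sub_le_sub_of_hasDerivAt_le ht.1 (fun s hs => hφ' s (hsub hs)) (fun s hs => hψ' s (hsub hs))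
      (fun s hs => hle s (hsub hs))
  have := sub_le_sub_of_hasDerivAt_le hab
    (fun t ht => (hφ t ht).sub ((hasDerivAt_id t).mul_const (φ' a)))
    (fun t ht => (hψ t ht).sub ((hasDerivAt_id t).mul_const (ψ' a)))
    (fun t ht => by simpa only [one_mul] using hderiv t ht)
  simp only [Pi.sub_apply, id_eq] at this
  linarith

lemma hasDerivAt_one_sub_mul (r t : ℝ) : HasDerivAt (fun s : ℝ => 1 - s * r) (-r) t := by
  simpa using ((hasDerivAt_id t).mul_const r).const_sub 1

lemma hasDerivAt_inv_one_sub_mul {r t : ℝ} (h : 1 - t * r ≠ 0) :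
    HasDerivAt (fun s : ℝ => (1 - s * r)⁻¹) (r / (1 - t * r) ^ 2) t := by
  simpa using (hasDerivAt_one_sub_mul r t).fun_inv h

lemma hasDerivAt_div_one_sub_mul_sq {r t : ℝ} (h : 1 - t * r ≠ 0) :
    HasDerivAt (fun s : ℝ => r / (1 - s * r) ^ 2) (2 * r ^ 2 / (1 - t * r) ^ 3) t := by
  have hderiv := ((hasDerivAt_inv_one_sub_mul h).fun_pow 2).const_mul r
  simp only [inv_pow, ← div_eq_mul_inv] at hderiv
  exact hderiv.congr_deriv (by norm_num; field_simp)

lemma one_sub_mul_pos_of_le {r s t : ℝ} (hr : 0 ≤ r) (htr : t * r < 1) (hst : s ≤ t) :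
    0 < 1 - s * r :=
  sub_pos.mpr ((mul_le_mul_of_nonneg_right hst hr).trans_lt htr)

variable {φ φ' : ℝ → ℝ} {t : ℝ} (ht : 0 ≤ t) (hφ : ∀ s ∈ Set.Icc 0 t, HasDerivAt φ (φ' s) s)
include ht hφ

lemma le_div_one_sub_mul_of_deriv_le_sq (hpos : ∀ s ∈ Set.Icc 0 t, 0 < φ s)
    (hle : ∀ s ∈ Set.Icc 0 t, φ' s ≤ φ s ^ 2) (htφ : t * φ 0 < 1) :
    φ t ≤ φ 0 / (1 - t * φ 0) := by
  have h0 := hpos 0 (Set.left_mem_Icc.mpr ht)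
  have hinv : -(φ t)⁻¹ - -(φ 0)⁻¹ ≤ t - 0 :=
    sub_le_sub_of_hasDerivAt_le ht (fun s hs => ((hφ s hs).fun_inv (hpos s hs).ne').fun_neg)
      (fun s _ => hasDerivAt_id s) (fun s hs => by
        rw [neg_div, neg_neg, div_le_one (pow_pos (hpos s hs) 2)]
        exact hle s hs)
  have hden : 0 < 1 - t * φ 0 := sub_pos.mpr htφ
  calc φ t = ((φ t)⁻¹)⁻¹ := (inv_inv _).symm
    _ ≤ ((1 - t * φ 0) / φ 0)⁻¹ := by
        refine inv_anti₀ (div_pos hden h0) ?_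
        rw [sub_div, mul_div_cancel_right₀ _ h0.ne', one_div]
        linarith
    _ = φ 0 / (1 - t * φ 0) := inv_div _ _

variable {r : ℝ} (hr : 0 ≤ r) (htr : t * r < 1)
include hr htr

lemma le_div_one_sub_mul_of_deriv_le (hle : ∀ s ∈ Set.Icc 0 t, φ' s ≤ r / (1 - s * r) * φ s) :
    φ t ≤ φ 0 / (1 - t * r) := by
  have hpos : ∀ s ∈ Set.Icc 0 t, 0 < 1 - s * r := fun s hs => one_sub_mul_pos_of_le hr htr hs.2
  have hdecr : φ t * (1 - t * r) - φ 0 * (1 - 0 * r) ≤ 0 - 0 :=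
    sub_le_sub_of_hasDerivAt_le ht (fun s hs => (hφ s hs).fun_mul (hasDerivAt_one_sub_mul r s))
      (fun s _ => hasDerivAt_const s 0) (fun s hs => by
        have := mul_le_mul_of_nonneg_right (hle s hs) (hpos s hs).le
        rw [div_mul_eq_mul_div, div_mul_cancel₀ _ (hpos s hs).ne'] at this
        linarith)
  rw [le_div_iff₀ (hpos t (Set.right_mem_Icc.mpr ht))]
  linarith

lemma one_sub_mul_mul_le_of_le_deriv
    (hle : ∀ s ∈ Set.Icc 0 t, -(r / (1 - s * r) * φ s) ≤ φ' s) :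
    (1 - t * r) * φ 0 ≤ φ t := by
  have hpos : ∀ s ∈ Set.Icc 0 t, 0 < 1 - s * r := fun s hs => one_sub_mul_pos_of_le hr htr hs.2
  have hincr : 0 - 0 ≤ (1 - t * r)⁻¹ * φ t - (1 - 0 * r)⁻¹ * φ 0 :=
    sub_le_sub_of_hasDerivAt_le ht (fun s _ => hasDerivAt_const s 0)
      (fun s hs => (hasDerivAt_inv_one_sub_mul (hpos s hs).ne').fun_mul (hφ s hs)) (fun s hs => by
        have hfactor : r / (1 - s * r) ^ 2 * φ s + (1 - s * r)⁻¹ * φ' s =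
            (1 - s * r)⁻¹ * (r / (1 - s * r) * φ s + φ' s) := by
          rw [sq, ← div_div, div_eq_inv_mul (r / (1 - s * r))]; ring
        rw [hfactor]
        exact mul_nonneg (inv_nonneg.mpr (hpos s hs).le) (by linarith [hle s hs]))
  rw [zero_mul, sub_zero, sub_zero, inv_one, one_mul, sub_nonneg] at hincr
  exact (le_inv_mul_iff₀ (hpos t (Set.right_mem_Icc.mpr ht))).mp hincr

end Comparison

section SelfConcordant

variable {E : Type*} [NormedAddCommGroup E] [NormedSpace ℝ E]

local notation:max "D²[" f "]" => fderiv ℝ (fderiv ℝ f)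
local notation:max "D³[" f "]" => fderiv ℝ (fderiv ℝ (fderiv ℝ f))

lemma hasDerivAt_comp_add_smul {F : Type*} [NormedAddCommGroup F] [NormedSpace ℝ F] {g : E → F}
    {g' : E →L[ℝ] F} {x u : E} {t : ℝ} (hg : HasFDerivAt g g' (x + t • u)) :
    HasDerivAt (fun s : ℝ => g (x + s • u)) (g' u) t := by
  have hline : HasDerivAt (fun s : ℝ => x + s • u) u t := by
    simpa using ((hasDerivAt_id t).smul_const u).const_add x
  exact HasFDerivAt.comp_hasDerivAt (l := g) (f := fun s : ℝ => x + s • u) t hg hline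

section ContDiffThree

variable {f : E → ℝ} (hf : ContDiff ℝ 3 f) (x u : E)
include hf

lemma hasFDerivAt_of_contDiff_three : HasFDerivAt f (fderiv ℝ f x) x :=
  (hf.differentiable (by norm_num) x).hasFDerivAt

lemma hasFDerivAt_fderiv_of_contDiff_three : HasFDerivAt (fderiv ℝ f) (D²[f] x) x :=
  ((hf.fderiv_right (m := 2) (by norm_num)).differentiable (by norm_num) x).hasFDerivAt

lemma hasFDerivAt_fderiv_fderiv_of_contDiff_three : HasFDerivAt (D²[f]) (D³[f] x) x :=
  (((hf.fderiv_right (m := 2) (by norm_num)).fderiv_right (m := 1) (by norm_num)).differentiable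
    (by norm_num) x).hasFDerivAt

lemma hasDerivAt_fderiv_add_smul (v : E) (t : ℝ) :
    HasDerivAt (fun s : ℝ => fderiv ℝ f (x + s • u) v) (D²[f] (x + t • u) u v) t := by
  simpa using (hasDerivAt_comp_add_smul (hasFDerivAt_fderiv_of_contDiff_three hf _)).clm_apply
    (hasDerivAt_const t v)

lemma hasDerivAt_fderiv_fderiv_add_smul (v w : E) (t : ℝ) :
    HasDerivAt (fun s : ℝ => D²[f] (x + s • u) v w) (D³[f] (x + t • u) u v w) t := by
  have hline : HasDerivAt (fun s : ℝ => D²[f] (x + s • u)) (D³[f] (x + t • u) u) t :=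
    hasDerivAt_comp_add_smul (g := D²[f])
      (hasFDerivAt_fderiv_fderiv_of_contDiff_three hf (x + t • u))
  simpa using (hline.clm_apply (hasDerivAt_const t v)).clm_apply (hasDerivAt_const t w)

lemma deriv_add_smul :
    deriv (fun s : ℝ => f (x + s • u)) = fun t => fderiv ℝ f (x + t • u) u :=
  funext fun _ => (hasDerivAt_comp_add_smul (hasFDerivAt_of_contDiff_three hf _)).deriv

lemma iteratedDeriv_two_add_smul :
    iteratedDeriv 2 (fun s : ℝ => f (x + s • u)) = fun t => D²[f] (x + t • u) u u := by
  rw [iteratedDeriv_succ, iteratedDeriv_one, deriv_add_smul hf]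
  exact funext fun t => (hasDerivAt_fderiv_add_smul hf x u u t).deriv

lemma iteratedDeriv_three_add_smul :
    iteratedDeriv 3 (fun s : ℝ => f (x + s • u)) = fun t => D³[f] (x + t • u) u u u := by
  rw [iteratedDeriv_succ, iteratedDeriv_two_add_smul hf]
  exact funext fun t => (hasDerivAt_fderiv_fderiv_add_smul hf x u u u t).deriv

lemma fderiv_fderiv_comm (v : E) : D²[f] x u v = D²[f] x v u :=
  (hf.contDiffAt.isSymmSndFDerivAt (by simp; norm_num)).eq u v

lemma fderiv_fderiv_fderiv_comm_left (v w : E) : D³[f] x u v w = D³[f] x v u w := by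
  have hsymm := ((hf.fderiv_right (m := 2) (by norm_num)).contDiffAt (x := x)).isSymmSndFDerivAt
    (by simp)
  rw [hsymm.eq u v]

lemma fderiv_fderiv_fderiv_comm_right (v w : E) : D³[f] x u v w = D³[f] x u w v := by
  have hvw := hasDerivAt_fderiv_fderiv_add_smul hf x u v w 0
  have hwv := hasDerivAt_fderiv_fderiv_add_smul hf x u w v 0
  simp_rw [fun y => fderiv_fderiv_comm hf y v w] at hvw
  simpa using hvw.unique hwv

end ContDiffThree

/-- Nondegenerate standard self-concordant functions on a normed space: the restriction `φ` of `f`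
to every line satisfies `|φ'''| ≤ 2 φ'' ^ (3 / 2)`, and the Hessian of `f`, encoded as the bilinear
form `D²[f] x`, is positive definite everywhere. -/
structure IsSelfConcordant (f : E → ℝ) : Prop where
  contDiff : ContDiff ℝ 3 f
  hessian_pos : ∀ x v, v ≠ 0 → 0 < D²[f] x v v
  abs_iteratedDeriv_three_le : ∀ x u : E, ∀ t : ℝ,
    |iteratedDeriv 3 (fun s : ℝ => f (x + s • u)) t|
      ≤ 2 * iteratedDeriv 2 (fun s : ℝ => f (x + s • u)) t ^ ((3 : ℝ) / 2)

/-- The local norm `‖v‖_x = √(D²[f] x v v)` that the Hessian of `f` at `x` defines on directions. -/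
noncomputable def localNorm (f : E → ℝ) (x v : E) : ℝ := √(D²[f] x v v)

lemma localNorm_nonneg (f : E → ℝ) (x v : E) : 0 ≤ localNorm f x v := Real.sqrt_nonneg _

lemma localNorm_zero (f : E → ℝ) (x : E) : localNorm f x 0 = 0 := by simp [localNorm]

namespace IsSelfConcordant

variable {f : E → ℝ} (hf : IsSelfConcordant f)
include hf

lemma hessian_nonneg (x v : E) : 0 ≤ D²[f] x v v := by
  rcases eq_or_ne v 0 with rfl | hv
  · simp
  · exact (hf.hessian_pos x v hv).le

lemma localNorm_pos (x : E) {v : E} (hv : v ≠ 0) : 0 < localNorm f x v :=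
  Real.sqrt_pos.mpr (hf.hessian_pos x v hv)

lemma abs_third_deriv_diag_le (x v : E) : |D³[f] x v v v| ≤ 2 * localNorm f x v ^ 3 := by
  have h := hf.abs_iteratedDeriv_three_le x v 0
  rw [iteratedDeriv_two_add_smul hf.contDiff, iteratedDeriv_three_add_smul hf.contDiff] at h
  simp only [zero_smul, add_zero] at h
  rwa [show (3 : ℝ) / 2 = 1 / 2 * (3 : ℕ) by norm_num, Real.rpow_mul (hf.hessian_nonneg x v),
    ← Real.sqrt_eq_rpow, Real.rpow_natCast] at h

lemma abs_third_deriv_le (x u v : E) :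
    |D³[f] x u v v| ≤ 2 * localNorm f x u * localNorm f x v ^ 2 :=
  abs_trilinear_le (fderiv_fderiv_fderiv_comm_left hf.contDiff x)
    (fderiv_fderiv_fderiv_comm_right hf.contDiff x) (fderiv_fderiv_comm hf.contDiff x)
    (hf.hessian_pos x) (hf.abs_third_deriv_diag_le x) u v

lemma hasDerivAt_localNorm_add_smul (x d : E) {v : E} (hv : v ≠ 0) (t : ℝ) :
    HasDerivAt (fun s : ℝ => localNorm f (x + s • d) v)
      (D³[f] (x + t • d) d v v / (2 * localNorm f (x + t • d) v)) t :=
  (hasDerivAt_fderiv_fderiv_add_smul hf.contDiff x d v v t).sqrt (hf.hessian_pos _ v hv).ne'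

lemma abs_deriv_localNorm_le (x d : E) {v : E} (hv : v ≠ 0) :
    |D³[f] x d v v / (2 * localNorm f x v)| ≤ localNorm f x d * localNorm f x v := by
  have hpos : 0 < 2 * localNorm f x v := mul_pos two_pos (hf.localNorm_pos x hv)
  rw [abs_div, abs_of_pos hpos, div_le_iff₀ hpos]
  exact (hf.abs_third_deriv_le x d v).trans_eq (by ring)

section Segment

variable {x d : E} {t : ℝ} (ht : 0 ≤ t) (htd : t * localNorm f x d < 1)
include ht htd

lemma localNorm_add_smul_self_le :
    localNorm f (x + t • d) d ≤ localNorm f x d / (1 - t * localNorm f x d) := by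
  rcases eq_or_ne d 0 with rfl | hd
  · simp [localNorm_zero]
  have h := le_div_one_sub_mul_of_deriv_le_sq ht
    (fun s _ => hf.hasDerivAt_localNorm_add_smul x d hd s) (fun s _ => hf.localNorm_pos _ hd)
    (fun s _ => ((le_abs_self _).trans (hf.abs_deriv_localNorm_le _ d hd)).trans_eq (sq _).symm)
  simp only [zero_smul, add_zero] at h
  exact h htd

lemma abs_deriv_localNorm_add_smul_le {v : E} (hv : v ≠ 0) :
    |D³[f] (x + t • d) d v v / (2 * localNorm f (x + t • d) v)| ≤
      localNorm f x d / (1 - t * localNorm f x d) * localNorm f (x + t • d) v :=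
  (hf.abs_deriv_localNorm_le _ d hv).trans
    (mul_le_mul_of_nonneg_right (hf.localNorm_add_smul_self_le ht htd) (localNorm_nonneg _ _ _))

lemma localNorm_add_smul_le (v : E) :
    localNorm f (x + t • d) v ≤ localNorm f x v / (1 - t * localNorm f x d) := by
  rcases eq_or_ne v 0 with rfl | hv
  · simp [localNorm_zero]
  have hr := localNorm_nonneg f x d
  simpa using le_div_one_sub_mul_of_deriv_le ht
    (fun s _ => hf.hasDerivAt_localNorm_add_smul x d hv s) hr htd
    (fun s hs => (abs_le.mp (hf.abs_deriv_localNorm_add_smul_le hs.1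
      (sub_pos.mp (one_sub_mul_pos_of_le hr htd hs.2)) hv)).2)

lemma le_localNorm_add_smul (v : E) :
    (1 - t * localNorm f x d) * localNorm f x v ≤ localNorm f (x + t • d) v := by
  rcases eq_or_ne v 0 with rfl | hv
  · simp [localNorm_zero]
  have hr := localNorm_nonneg f x d
  simpa using one_sub_mul_mul_le_of_le_deriv ht
    (fun s _ => hf.hasDerivAt_localNorm_add_smul x d hv s) hr htd
    (fun s hs => (abs_le.mp (hf.abs_deriv_localNorm_add_smul_le hs.1
      (sub_pos.mp (one_sub_mul_pos_of_le hr htd hs.2)) hv)).1)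

lemma third_deriv_add_smul_le (w : E) :
    D³[f] (x + t • d) d d w ≤
      localNorm f x w * (2 * localNorm f x d ^ 2 / (1 - t * localNorm f x d) ^ 3) := by
  have hpos : 0 < 1 - t * localNorm f x d := sub_pos.mpr htd
  rw [fderiv_fderiv_fderiv_comm_right hf.contDiff, fderiv_fderiv_fderiv_comm_left hf.contDiff]
  calc D³[f] (x + t • d) w d d
      ≤ 2 * localNorm f (x + t • d) w * localNorm f (x + t • d) d ^ 2 :=
        (le_abs_self _).trans (hf.abs_third_deriv_le _ w d)
    _ ≤ 2 * (localNorm f x w / (1 - t * localNorm f x d)) *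
          (localNorm f x d / (1 - t * localNorm f x d)) ^ 2 := by
        gcongr
        exacts [mul_nonneg two_pos.le (div_nonneg (localNorm_nonneg f x w) hpos.le),
          hf.localNorm_add_smul_le ht htd w, localNorm_nonneg f _ d,
          hf.localNorm_add_smul_self_le ht htd]
    _ = localNorm f x w * (2 * localNorm f x d ^ 2 / (1 - t * localNorm f x d) ^ 3) := by
        field_simp

end Segment

variable {x d : E}

lemma fderiv_add_sub_le (hd : localNorm f x d < 1) (w : E) :
    fderiv ℝ f (x + d) w - fderiv ℝ f x w - D²[f] x d w ≤
      localNorm f x w * (localNorm f x d ^ 2 / (1 - localNorm f x d)) := by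
  set r := localNorm f x d
  have hr1 : (1 : ℝ) * r < 1 := by rwa [one_mul]
  have hpos : ∀ s ∈ Set.Icc (0 : ℝ) 1, 0 < 1 - s * r := fun s hs =>
    one_sub_mul_pos_of_le (localNorm_nonneg f x d) hr1 hs.2
  have htaylor := taylor_remainder_le_of_hasDerivAt_le (zero_le_one (α := ℝ))
    (fun s _ => hasDerivAt_fderiv_add_smul hf.contDiff x d w s)
    (fun s _ => hasDerivAt_fderiv_fderiv_add_smul hf.contDiff x d d w s)
    (fun s hs => (hasDerivAt_inv_one_sub_mul (hpos s hs).ne').const_mul (localNorm f x w))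
    (fun s hs => (hasDerivAt_div_one_sub_mul_sq (hpos s hs).ne').const_mul (localNorm f x w))
    (fun s hs => hf.third_deriv_add_smul_le hs.1 (sub_pos.mp (hpos s hs)) w)
  have hr0 : 1 - r ≠ 0 := (sub_pos.mpr hd).ne'
  calc fderiv ℝ f (x + d) w - fderiv ℝ f x w - D²[f] x d w
      ≤ localNorm f x w * (1 - r)⁻¹ - localNorm f x w - localNorm f x w * r := by
        simpa using htaylor
    _ = localNorm f x w * (r ^ 2 / (1 - r)) := by field_simp; ring

lemma fderiv_add_le {μ ρ : ℝ} (hd : localNorm f x d ≤ μ) (hμ : μ < 1) (hρ : 0 ≤ ρ)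
    (hres : ∀ w, fderiv ℝ f x w + D²[f] x d w ≤ ρ * localNorm f x w) (w : E) :
    fderiv ℝ f (x + d) w ≤ (ρ + μ ^ 2 / (1 - μ)) / (1 - μ) * localNorm f (x + d) w := by
  have hr1 : localNorm f x d < 1 := hd.trans_lt hμ
  have hμpos : 0 < 1 - μ := sub_pos.mpr hμ
  have hgrad : fderiv ℝ f (x + d) w ≤ (ρ + μ ^ 2 / (1 - μ)) * localNorm f x w := calc
    fderiv ℝ f (x + d) w
        ≤ ρ * localNorm f x w
          + localNorm f x w * (localNorm f x d ^ 2 / (1 - localNorm f x d)) := by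
        linarith [hf.fderiv_add_sub_le hr1 w, hres w]
    _ = (ρ + localNorm f x d ^ 2 / (1 - localNorm f x d)) * localNorm f x w := by ring
    _ ≤ (ρ + μ ^ 2 / (1 - μ)) * localNorm f x w := by
        gcongr
        exacts [localNorm_nonneg f x w, localNorm_nonneg f x d]
  have hnorm : (1 - μ) * localNorm f x w ≤ localNorm f (x + d) w := by
    have h := hf.le_localNorm_add_smul zero_le_one (by rwa [one_mul]) w (d := d)
    rw [one_mul, one_smul] at h
    exact (mul_le_mul_of_nonneg_right (by linarith) (localNorm_nonneg f x w)).trans h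
  calc fderiv ℝ f (x + d) w
      ≤ (ρ + μ ^ 2 / (1 - μ)) / (1 - μ) * ((1 - μ) * localNorm f x w) :=
        hgrad.trans_eq (by field_simp)
    _ ≤ (ρ + μ ^ 2 / (1 - μ)) / (1 - μ) * localNorm f (x + d) w := by
        gcongr

end IsSelfConcordant

end SelfConcordant

section LoewnerOrder

open scoped MatrixOrder

variable {ι : Type*} {A B Q : Matrix ι ι ℝ}

lemma posDef_of_posDef_of_le (hA : A.PosDef) (h : A ≤ B) : B.PosDef :=
  add_sub_cancel A B ▸ hA.add_posSemidef (Matrix.le_iff.mp h)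

variable [Fintype ι]

lemma dotProduct_mulVec_self_le_of_le (h : A ≤ B) (v : ι → ℝ) : v ⬝ᵥ A *ᵥ v ≤ v ⬝ᵥ B *ᵥ v := by
  have := (Matrix.le_iff.mp h).dotProduct_mulVec_nonneg v
  rw [star_trivial, sub_mulVec, dotProduct_sub] at this
  exact sub_nonneg.mp this

lemma dotProduct_mulVec_comm_of_isHermitian (hA : A.IsHermitian) (v w : ι → ℝ) :
    v ⬝ᵥ A *ᵥ w = w ⬝ᵥ A *ᵥ v := by
  rw [dotProduct_comm, dotProduct_mulVec w, ← mulVec_transpose,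
    (isHermitian_iff_isSymm.mp hA).eq]

lemma sq_dotProduct_mulVec_le_of_posSemidef (hA : A.PosSemidef) (v w : ι → ℝ) :
    (v ⬝ᵥ A *ᵥ w) ^ 2 ≤ (v ⬝ᵥ A *ᵥ v) * (w ⬝ᵥ A *ᵥ w) := by
  classical
  have h := LinearMap.BilinForm.apply_sq_le_of_symm (Matrix.toBilin' A)
    (fun v => by simpa [Matrix.toBilin'_apply'] using hA.dotProduct_mulVec_nonneg v)
    ⟨fun v w => by
      simpa [Matrix.toBilin'_apply'] using
        dotProduct_mulVec_comm_of_isHermitian hA.isHermitian v w⟩ v w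
  simpa only [Matrix.toBilin'_apply'] using h

lemma dotProduct_mulVec_le_of_le_smul (hA : A.PosSemidef) {κ : ℝ} (hκ : 0 ≤ κ) (h : A ≤ κ • B)
    (v w : ι → ℝ) : v ⬝ᵥ A *ᵥ w ≤ κ * √(v ⬝ᵥ B *ᵥ v) * √(w ⬝ᵥ B *ᵥ w) := by
  have hle : ∀ v, √(v ⬝ᵥ A *ᵥ v) ≤ √κ * √(v ⬝ᵥ B *ᵥ v) := fun v => by
    rw [← Real.sqrt_mul hκ, ← smul_eq_mul, ← dotProduct_smul, ← smul_mulVec]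
    exact Real.sqrt_le_sqrt (dotProduct_mulVec_self_le_of_le h v)
  calc v ⬝ᵥ A *ᵥ w
      ≤ √((v ⬝ᵥ A *ᵥ v) * (w ⬝ᵥ A *ᵥ w)) :=
        Real.le_sqrt_of_sq_le (sq_dotProduct_mulVec_le_of_posSemidef hA v w)
    _ = √(v ⬝ᵥ A *ᵥ v) * √(w ⬝ᵥ A *ᵥ w) := Real.sqrt_mul (hA.dotProduct_mulVec_nonneg v) _
    _ ≤ √κ * √(v ⬝ᵥ B *ᵥ v) * (√κ * √(w ⬝ᵥ B *ᵥ w)) :=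
        mul_le_mul (hle v) (hle w) (Real.sqrt_nonneg _) (by positivity)
    _ = κ * √(v ⬝ᵥ B *ᵥ v) * √(w ⬝ᵥ B *ᵥ w) := by
        rw [mul_mul_mul_comm, Real.mul_self_sqrt hκ, mul_assoc]

variable [DecidableEq ι]

lemma mulVec_inv_mulVec_of_posDef (hA : A.PosDef) (v : ι → ℝ) : A *ᵥ A⁻¹ *ᵥ v = v := by
  rw [mulVec_mulVec, mul_nonsing_inv _ ((isUnit_iff_isUnit_det A).mp hA.isUnit), one_mulVec]

lemma sq_dotProduct_le_of_posDef (hA : A.PosDef) (v w : ι → ℝ) :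
    (v ⬝ᵥ w) ^ 2 ≤ (v ⬝ᵥ A⁻¹ *ᵥ v) * (w ⬝ᵥ A *ᵥ w) := by
  have h := sq_dotProduct_mulVec_le_of_posSemidef hA.posSemidef w (A⁻¹ *ᵥ v)
  rw [mulVec_inv_mulVec_of_posDef hA, dotProduct_comm w, dotProduct_comm _ v] at h
  exact h.trans_eq (mul_comm _ _)

lemma smul_inv_le_inv_of_smul_le (hA : A.PosDef) (hB : B.PosDef) {c : ℝ} (hc : 0 ≤ c)
    (h : c • A ≤ B) : c • B⁻¹ ≤ A⁻¹ := by
  refine Matrix.le_iff.mpr (PosSemidef.of_dotProduct_mulVec_nonneg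
    (hA.inv.isHermitian.sub (hB.inv.isHermitian.smul (.all c))) fun g => ?_)
  rw [star_trivial, sub_mulVec, dotProduct_sub, smul_mulVec, dotProduct_smul, smul_eq_mul,
    sub_nonneg]
  set p := B⁻¹ *ᵥ g
  have hAB : c * (p ⬝ᵥ A *ᵥ p) ≤ g ⬝ᵥ p := calc
    c * (p ⬝ᵥ A *ᵥ p) = p ⬝ᵥ (c • A) *ᵥ p := by rw [smul_mulVec, dotProduct_smul, smul_eq_mul]
    _ ≤ p ⬝ᵥ B *ᵥ p := dotProduct_mulVec_self_le_of_le h p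
    _ = g ⬝ᵥ p := by rw [mulVec_inv_mulVec_of_posDef hB, dotProduct_comm]
  have hginv : 0 ≤ g ⬝ᵥ A⁻¹ *ᵥ g := hA.inv.posSemidef.dotProduct_mulVec_nonneg g
  have hgp : 0 ≤ g ⬝ᵥ p := hB.inv.posSemidef.dotProduct_mulVec_nonneg g
  rcases hgp.eq_or_lt with hgp | hgp
  · rwa [← hgp, mul_zero]
  refine le_of_mul_le_mul_right ?_ hgp
  calc c * (g ⬝ᵥ p) * (g ⬝ᵥ p) = c * (g ⬝ᵥ p) ^ 2 := by ring
    _ ≤ c * ((g ⬝ᵥ A⁻¹ *ᵥ g) * (p ⬝ᵥ A *ᵥ p)) :=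
        mul_le_mul_of_nonneg_left (sq_dotProduct_le_of_posDef hA g p) hc
    _ = (g ⬝ᵥ A⁻¹ *ᵥ g) * (c * (p ⬝ᵥ A *ᵥ p)) := by ring
    _ ≤ (g ⬝ᵥ A⁻¹ *ᵥ g) * (g ⬝ᵥ p) := mul_le_mul_of_nonneg_left hAB hginv

lemma sqrt_dotProduct_inv_mulVec_le (hA : A.PosDef) {g : ι → ℝ} {μ : ℝ} (hμ : 0 ≤ μ)
    (h : ∀ w, g ⬝ᵥ w ≤ μ * √(w ⬝ᵥ A *ᵥ w)) : √(g ⬝ᵥ A⁻¹ *ᵥ g) ≤ μ := by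
  have hg := h (A⁻¹ *ᵥ g)
  rw [mulVec_inv_mulVec_of_posDef hA, dotProduct_comm _ g] at hg
  rcases (Real.sqrt_nonneg (g ⬝ᵥ A⁻¹ *ᵥ g)).eq_or_lt with hzero | hpos
  · rwa [← hzero]
  · rw [← Real.div_sqrt, div_le_iff₀ hpos]
    exact hg

variable (hA : A.PosDef) (hAQ : A ≤ Q)
include hA hAQ

lemma inv_le_inv_of_posDef : Q⁻¹ ≤ A⁻¹ := by
  simpa using smul_inv_le_inv_of_smul_le hA (posDef_of_posDef_of_le hA hAQ) zero_le_one
    (by rwa [one_smul])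

lemma step_dotProduct_mulVec_step_le (g : ι → ℝ) :
    -(Q⁻¹ *ᵥ g) ⬝ᵥ A *ᵥ -(Q⁻¹ *ᵥ g) ≤ g ⬝ᵥ A⁻¹ *ᵥ g := by
  have hQ := posDef_of_posDef_of_le hA hAQ
  calc -(Q⁻¹ *ᵥ g) ⬝ᵥ A *ᵥ -(Q⁻¹ *ᵥ g)
      ≤ -(Q⁻¹ *ᵥ g) ⬝ᵥ Q *ᵥ -(Q⁻¹ *ᵥ g) := dotProduct_mulVec_self_le_of_le hAQ _
    _ = g ⬝ᵥ Q⁻¹ *ᵥ g := by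
        rw [mulVec_neg, neg_dotProduct_neg, mulVec_inv_mulVec_of_posDef hQ, dotProduct_comm]
    _ ≤ g ⬝ᵥ A⁻¹ *ᵥ g :=
        dotProduct_mulVec_self_le_of_le (inv_le_inv_of_posDef hA hAQ) g

lemma newton_residual_le {c : ℝ} (hc : 0 ≤ c) (hc1 : c ≤ 1) (hQA : c • Q ≤ A) (g w : ι → ℝ) :
    g ⬝ᵥ w + -(Q⁻¹ *ᵥ g) ⬝ᵥ A *ᵥ w ≤ (1 - c) * √(g ⬝ᵥ A⁻¹ *ᵥ g) * √(w ⬝ᵥ A *ᵥ w) := by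
  have hQ := posDef_of_posDef_of_le hA hAQ
  have hpos : (A⁻¹ - Q⁻¹).PosSemidef := Matrix.le_iff.mp (inv_le_inv_of_posDef hA hAQ)
  have hle : A⁻¹ - Q⁻¹ ≤ (1 - c) • A⁻¹ := by
    rw [sub_smul, one_smul]
    exact sub_le_sub_left (smul_inv_le_inv_of_smul_le hQ hA hc hQA) _
  have hinv : A⁻¹ *ᵥ A *ᵥ w = w := by
    rw [mulVec_mulVec, nonsing_inv_mul _ ((isUnit_iff_isUnit_det A).mp hA.isUnit), one_mulVec]
  have hres : g ⬝ᵥ w + -(Q⁻¹ *ᵥ g) ⬝ᵥ A *ᵥ w = g ⬝ᵥ (A⁻¹ - Q⁻¹) *ᵥ A *ᵥ w := by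
    rw [sub_mulVec, dotProduct_sub, hinv, neg_dotProduct, ← sub_eq_add_neg,
      dotProduct_mulVec_comm_of_isHermitian hQ.inv.isHermitian, dotProduct_comm (Q⁻¹ *ᵥ g)]
  have h := dotProduct_mulVec_le_of_le_smul hpos (sub_nonneg.mpr hc1) hle g (A *ᵥ w)
  rwa [← hres, hinv, dotProduct_comm (A *ᵥ w)] at h

end LoewnerOrder

section Eigenbasis

open scoped MatrixOrder

variable {ι : Type*} [Fintype ι] [DecidableEq ι] {u : ι → ι → ℝ}
  (hu : ∀ i j, u i ⬝ᵥ u j = if i = j then (1 : ℝ) else 0)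
include hu

lemma posSemidef_of_eigenbasis {M : Matrix ι ι ℝ} {s : ι → ℝ} (hM : ∀ i, M *ᵥ u i = s i • u i)
    (hs : ∀ i, 0 ≤ s i) : M.PosSemidef := by
  set U := Matrix.of u
  have hUU : U * Uᵀ = 1 := by
    ext i j
    rw [mul_apply', one_apply]
    exact hu i j
  have hMU : M * Uᵀ = Uᵀ * diagonal s := by
    ext i j
    rw [mul_diagonal, mul_comm]
    exact congrFun (hM j) i
  have hM' : M = Uᴴ * diagonal s * U := by
    rw [conjTranspose_eq_transpose_of_trivial, ← hMU, mul_assoc, mul_eq_one_comm.mp hUU, mul_one]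
  rw [hM']
  exact (PosSemidef.diagonal hs).conjTranspose_mul_mul_same U

lemma le_of_eigenbasis {A B : Matrix ι ι ℝ} {a b : ι → ℝ} (hA : ∀ i, A *ᵥ u i = a i • u i)
    (hB : ∀ i, B *ᵥ u i = b i • u i) (hab : ∀ i, a i ≤ b i) : A ≤ B :=
  Matrix.le_iff.mpr (posSemidef_of_eigenbasis hu
    (fun i => by rw [sub_mulVec, hA, hB, ← sub_smul]) (fun i => sub_nonneg.mpr (hab i)))

end Eigenbasis

section Truncation

open scoped MatrixOrder

variable {ι : Type*} [LinearOrder ι] {σ : ι → ℝ} (hσ : Antitone σ) {k : ι}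
include hσ

lemma le_truncated (i : ι) : σ i ≤ if i < k then σ i else σ k := by
  split_ifs with hik
  · exact le_rfl
  · exact hσ (not_lt.mp hik)

lemma div_mul_truncated_le (hpos : ∀ i, 0 < σ i) {j : ι} (hj : IsTop j) (i : ι) :
    σ j / σ k * (if i < k then σ i else σ k) ≤ σ i := by
  split_ifs
  · exact mul_le_of_le_one_left (hpos i).le ((div_le_one (hpos k)).mpr (hσ (hj k)))
  · rw [div_mul_cancel₀ _ (hpos k).ne']
    exact hσ (hj i)

variable [Fintype ι] {u : ι → ι → ℝ} (hu : ∀ i j, u i ⬝ᵥ u j = if i = j then (1 : ℝ) else 0)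
  {A Q : Matrix ι ι ℝ} (hA : ∀ i, A *ᵥ u i = σ i • u i)
  (hQ : ∀ i, Q *ᵥ u i = (if i < k then σ i else σ k) • u i)
include hu hA hQ

lemma le_truncation : A ≤ Q := le_of_eigenbasis hu hA hQ (le_truncated hσ)

lemma smul_truncation_le (hpos : ∀ i, 0 < σ i) {j : ι} (hj : IsTop j) : (σ j / σ k) • Q ≤ A :=
  le_of_eigenbasis hu (fun i => by rw [smul_mulVec, hQ, smul_smul]) hA
    (div_mul_truncated_le hσ hpos hj)

end Truncation

section NewtonDecrement

open scoped MatrixOrder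

variable {ι : Type*} [Fintype ι] {f : (ι → ℝ) → ℝ} {grad : (ι → ℝ) → ι → ℝ}
  {hess : (ι → ℝ) → Matrix ι ι ℝ} (hf : ContDiff ℝ 3 f)
include hf

lemma fderiv_apply_eq_of_deriv_add_smul
    (hgrad : ∀ x u : ι → ℝ, deriv (fun t : ℝ => f (x + t • u)) 0 = grad x ⬝ᵥ u) (x v : ι → ℝ) :
    fderiv ℝ f x v = grad x ⬝ᵥ v := by
  simpa [deriv_add_smul hf] using hgrad x v

variable (hhessq : ∀ x u : ι → ℝ,
  iteratedDeriv 2 (fun t : ℝ => f (x + t • u)) 0 = u ⬝ᵥ (hess x *ᵥ u))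
include hhessq

lemma fderiv_fderiv_self_eq_of_iteratedDeriv_add_smul (x v : ι → ℝ) :
    fderiv ℝ (fderiv ℝ f) x v v = v ⬝ᵥ hess x *ᵥ v := by
  simpa [iteratedDeriv_two_add_smul hf] using hhessq x v

lemma fderiv_fderiv_eq_of_iteratedDeriv_add_smul {x : ι → ℝ} (hx : (hess x).IsHermitian)
    (v w : ι → ℝ) : fderiv ℝ (fderiv ℝ f) x v w = v ⬝ᵥ hess x *ᵥ w := by
  have hquad := fderiv_fderiv_self_eq_of_iteratedDeriv_add_smul hf hhessq x
  have hvw := hquad (v + w)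
  simp only [map_add, _root_.add_apply, mulVec_add, dotProduct_add, add_dotProduct, hquad,
    fderiv_fderiv_comm hf x w v, dotProduct_mulVec_comm_of_isHermitian hx w v] at hvw
  linarith

lemma isSelfConcordant_of_posDef (hhpd : ∀ x, (hess x).PosDef)
    (hsc : ∀ x u : ι → ℝ, ∀ t : ℝ,
      |iteratedDeriv 3 (fun s : ℝ => f (x + s • u)) t|
        ≤ 2 * iteratedDeriv 2 (fun s : ℝ => f (x + s • u)) t ^ ((3 : ℝ) / 2)) :
    IsSelfConcordant f where
  contDiff := hf
  hessian_pos x v hv := by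
    rw [fderiv_fderiv_self_eq_of_iteratedDeriv_add_smul hf hhessq]
    exact (hhpd x).dotProduct_mulVec_pos hv
  abs_iteratedDeriv_three_le := hsc

end NewtonDecrement

open scoped MatrixOrder in
theorem stmt13_general {ι : Type*} [Fintype ι] [DecidableEq ι]
    (f : (ι → ℝ) → ℝ) (grad : (ι → ℝ) → ι → ℝ) (hess : (ι → ℝ) → Matrix ι ι ℝ)
    (hf : ContDiff ℝ 3 f)
    (hgrad : ∀ x u : ι → ℝ, deriv (fun t : ℝ => f (x + t • u)) 0 = grad x ⬝ᵥ u)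
    (hhessq : ∀ x u : ι → ℝ,
      iteratedDeriv 2 (fun t : ℝ => f (x + t • u)) 0 = u ⬝ᵥ (hess x *ᵥ u))
    (hhpd : ∀ x, (hess x).PosDef)
    (hsc : ∀ x u : ι → ℝ, ∀ t : ℝ,
      |iteratedDeriv 3 (fun s : ℝ => f (x + s • u)) t|
        ≤ 2 * iteratedDeriv 2 (fun s : ℝ => f (x + s • u)) t ^ ((3 : ℝ) / 2))
    (x : ι → ℝ) (Q : Matrix ι ι ℝ) {c : ℝ} (hc : 0 ≤ c) (hc1 : c ≤ 1)
    (hQlower : c • Q ≤ hess x) (hQupper : hess x ≤ Q)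
    (lam : ℝ) (hlam : lam = √(grad x ⬝ᵥ (hess x)⁻¹ *ᵥ grad x)) (hlam1 : lam < 1) :
    √(grad (x + -(Q⁻¹ *ᵥ grad x)) ⬝ᵥ
        (hess (x + -(Q⁻¹ *ᵥ grad x)))⁻¹ *ᵥ grad (x + -(Q⁻¹ *ᵥ grad x)))
      ≤ ((1 - c) + lam) / (1 - lam) ^ 2 * lam := by
  have hfsc : IsSelfConcordant f := isSelfConcordant_of_posDef hf hhessq hhpd hsc
  have hnorm : ∀ y w, localNorm f y w = √(w ⬝ᵥ hess y *ᵥ w) := fun y w => by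
    rw [localNorm, fderiv_fderiv_self_eq_of_iteratedDeriv_add_smul hf hhessq]
  have hlam0 : 0 ≤ lam := hlam ▸ Real.sqrt_nonneg _
  have hκ : 0 ≤ 1 - c := sub_nonneg.mpr hc1
  have hpos : 0 < 1 - lam := sub_pos.mpr hlam1
  set d := -(Q⁻¹ *ᵥ grad x)
  have hstep : localNorm f x d ≤ lam := by
    rw [hnorm, hlam]
    exact Real.sqrt_le_sqrt (step_dotProduct_mulVec_step_le (hhpd x) hQupper (grad x))
  have hres : ∀ w, fderiv ℝ f x w + fderiv ℝ (fderiv ℝ f) x d w ≤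
      (1 - c) * lam * localNorm f x w := fun w => by
    rw [fderiv_apply_eq_of_deriv_add_smul hf hgrad,
      fderiv_fderiv_eq_of_iteratedDeriv_add_smul hf hhessq (hhpd x).isHermitian, hnorm, hlam]
    exact newton_residual_le (hhpd x) hQupper hc hc1 hQlower (grad x) w
  calc √(grad (x + d) ⬝ᵥ (hess (x + d))⁻¹ *ᵥ grad (x + d))
      ≤ ((1 - c) * lam + lam ^ 2 / (1 - lam)) / (1 - lam) :=
        sqrt_dotProduct_inv_mulVec_le (hhpd _) (by positivity) fun w => by
          rw [← fderiv_apply_eq_of_deriv_add_smul hf hgrad, ← hnorm]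
          exact hfsc.fderiv_add_le hstep hlam1 (mul_nonneg hκ hlam0) hres w
    _ = ((1 - c) * (1 - lam) + lam) / (1 - lam) ^ 2 * lam := by field_simp
    _ ≤ ((1 - c) + lam) / (1 - lam) ^ 2 * lam := by
        gcongr
        exact mul_le_of_le_one_right hκ (sub_le_self 1 hlam0)

/-- Let `f` be strictly convex standard self-concordant, `x`
a point with Newton decrement `λ(x) < 1`, `σ_1 ≥ … ≥ σ_n > 0` the eigenvalues
of `∇²f(x)`, `Q` the truncated approximation of `∇²f(x)` with parameter `N`,
`d̂ = −Q⁻¹ ∇f(x)` and `x⁺ := x + d̂` (unit step).  Then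
`λ(x⁺) ≤ [(1 − σ_n/σ_{N+1}) + λ(x)] / (1 − λ(x))² · λ(x)`. -/
theorem stmt13 {n N : ℕ} (hN : 1 ≤ N) (hNn : N < n)
    (f : (Fin n → ℝ) → ℝ) (grad : (Fin n → ℝ) → Fin n → ℝ)
    (hess : (Fin n → ℝ) → Matrix (Fin n) (Fin n) ℝ)
    (hf : ContDiff ℝ 3 f)
    (hconv : StrictConvexOn ℝ Set.univ f)
    (hgrad : ∀ x u : Fin n → ℝ, deriv (fun t : ℝ => f (x + t • u)) 0 = grad x ⬝ᵥ u)
    (hhessq : ∀ x u : Fin n → ℝ,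
      iteratedDeriv 2 (fun t : ℝ => f (x + t • u)) 0 = u ⬝ᵥ (hess x *ᵥ u))
    (hhsymm : ∀ x, (hess x).IsSymm)
    (hhpd : ∀ x, (hess x).PosDef)
    (hsc : ∀ x u : Fin n → ℝ, ∀ t : ℝ,
      |iteratedDeriv 3 (fun s : ℝ => f (x + s • u)) t|
        ≤ 2 * iteratedDeriv 2 (fun s : ℝ => f (x + s • u)) t ^ ((3 : ℝ) / 2))
    (hclosed : ∀ c : ℝ, IsClosed {x | f x ≤ c})
    (hbdd : BddBelow (Set.range f))
    (x : Fin n → ℝ)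
    (σ : Fin n → ℝ) (u : Fin n → Fin n → ℝ)
    (hσpos : ∀ i, 0 < σ i)
    (hσmono : ∀ i j : Fin n, i ≤ j → σ j ≤ σ i)
    (hortho : ∀ i j : Fin n, u i ⬝ᵥ u j = if i = j then (1 : ℝ) else 0)
    (heig : ∀ i, hess x *ᵥ u i = σ i • u i)
    (Q : Matrix (Fin n) (Fin n) ℝ) (hQsymm : Q.IsSymm)
    (hQeig : ∀ i : Fin n, Q *ᵥ u i = (if (i : ℕ) < N then σ i else σ ⟨N, hNn⟩) • u i)
    (lam : ℝ) (hlam : lam = Real.sqrt (grad x ⬝ᵥ ((hess x)⁻¹ *ᵥ grad x)))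
    (hlam1 : lam < 1) :
    Real.sqrt (grad (x + -(Q⁻¹ *ᵥ grad x)) ⬝ᵥ
        ((hess (x + -(Q⁻¹ *ᵥ grad x)))⁻¹ *ᵥ grad (x + -(Q⁻¹ *ᵥ grad x))))
      ≤ ((1 - σ ⟨n - 1, by omega⟩ / σ ⟨N, hNn⟩) + lam) / (1 - lam) ^ 2 * lam := by
  have hlast : IsTop (⟨n - 1, by omega⟩ : Fin n) := fun i => Nat.le_sub_one_of_lt i.isLt
  exact stmt13_general f grad hess hf hgrad hhessq hhpd hsc x Q (div_pos (hσpos _) (hσpos _)).le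
    ((div_le_one (hσpos _)).mpr (hσmono _ _ (hlast _)))
    (smul_truncation_le hσmono hortho heig hQeig hσpos hlast)
    (le_truncation (k := ⟨N, hNn⟩) hσmono hortho heig hQeig) lam hlam hlam1
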